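/- arXiv:2603.09596 — 5 statements merged into one kernel-verified Lean document; each statement's English description precedes it below -/
import Mathlib

section
/- Minimality of the ideal configuration (first half of Theorem 2): for every admissible configuration c (i.e. c : Fin n → ℕ with c i ≤ 1 for all i and ∑ i, c i = β), the load-balancing cost satisfies S(c_p) ≤ S(c), where c_p is the ideal configuration. -/
/-!
For `b ∈ {0, 1}` and `x ∈ [0, 1]` one has `|b - x| = b + x - 2 b x`, so the cost is affine in the
configuration: `S(c_p) - S(c) = ∑ (c_p i - c i) (1 - 2 f i)`. If `t` separates the values of `f`
before index `α` from those at or after it, then `(c_p i - c i) (f i - t) ≥ 0` for every `i`, so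
each term is at most `(c_p i - c i) (1 - 2 t)`, and these bounds sum to `0` because `c_p` and `c`
have the same total `β`.
-/

/-- Minimality of the ideal configuration (first half of Theorem 2):
for every admissible configuration `c` (i.e. `c i ≤ 1` for all `i` and `∑ i, c i = β`),
the load-balancing cost of the ideal configuration `c_p` (which is `0` on the first
`α = n - β` indices and `1` on the rest) is at most that of `c`. -/
theorem ideal_configuration_minimizes_cost
    (n : ℕ) (hn : 1 ≤ n) (f : Fin n → ℝ) (hmono : Monotone f)
    (hf0 : ∀ i, 0 ≤ f i) (hf1 : ∀ i, f i < 1)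
    (β : ℕ) (hβ : β ≤ n) (hsum : ∑ i, f i = (β : ℝ))
    (α : ℕ) (hα : α = n - β)
    (c_p : Fin n → ℕ) (hcp : ∀ i : Fin n, c_p i = if (i : ℕ) < α then 0 else 1)
    (c : Fin n → ℕ) (hc1 : ∀ i, c i ≤ 1) (hcβ : ∑ i, c i = β) :
    ∑ i, |((c_p i : ℝ) - f i)| ≤ ∑ i, |((c i : ℝ) - f i)| := by
  have hcard : ∑ i, c_p i = β := by
    have hcount : ∑ i, c_p i = ∑ k ∈ Finset.range n, if k < α then 0 else 1 := by
      rw [← Fin.sum_univ_eq_sum_range (fun k => if k < α then 0 else 1)]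
      exact Finset.sum_congr rfl fun i _ => hcp i
    have hfilter : (Finset.range n).filter (fun k => ¬ k < α) = Finset.Ico α n := by
      ext k
      simp only [Finset.mem_filter, Finset.mem_range, Finset.mem_Ico]
      omega
    have hflip : ∀ k, (if k < α then 0 else 1) = if ¬ k < α then 1 else 0 := by
      intro k
      split_ifs <;> rfl
    rw [hcount, Finset.sum_congr rfl fun k _ => hflip k, ← Finset.card_filter, hfilter,
      Nat.card_Ico]
    omega
  obtain ⟨t, htlow, hthigh⟩ : ∃ t : ℝ, (∀ i : Fin n, (i : ℕ) < α → f i ≤ t) ∧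
      (∀ i : Fin n, ¬ (i : ℕ) < α → t ≤ f i) := by
    by_cases h : α < n
    · refine ⟨f ⟨α, h⟩, fun i hi => hmono ?_, fun i hi => hmono ?_⟩
      · exact Fin.le_def.mpr hi.le
      · exact Fin.le_def.mpr (not_lt.mp hi)
    · -- Here `β = 0` and no index reaches `α`, so any upper bound of `f` separates.
      exact ⟨1, fun i _ => (hf1 i).le, fun i hi => absurd i.isLt (by omega)⟩
  have hterm : ∀ i, |((c_p i : ℝ) - f i)| ≤
      |((c i : ℝ) - f i)| + ((c_p i : ℝ) - c i) * (1 - 2 * t) := by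
    intro i
    have h0 := hf0 i
    have h1 := hf1 i
    have habs0 : |(0 : ℝ) - f i| = f i := by rw [zero_sub, abs_neg, abs_of_nonneg h0]
    have habs1 : |(1 : ℝ) - f i| = 1 - f i := abs_of_nonneg (by linarith)
    have hci : c i = 0 ∨ c i = 1 := by
      have := hc1 i
      omega
    by_cases hi : (i : ℕ) < α
    · have ht := htlow i hi
      rw [hcp i, if_pos hi]
      rcases hci with h | h <;> rw [h] <;> push_cast <;> simp only [habs0, habs1] <;> linarith
    · have ht := hthigh i hi
      rw [hcp i, if_neg hi]
      rcases hci with h | h <;> rw [h] <;> push_cast <;> simp only [habs0, habs1] <;> linarith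
  have hzero : ∑ i, ((c_p i : ℝ) - c i) * (1 - 2 * t) = 0 := by
    rw [← Finset.sum_mul, Finset.sum_sub_distrib, ← Nat.cast_sum, ← Nat.cast_sum, hcard, hcβ,
      sub_self, zero_mul]
  calc ∑ i, |((c_p i : ℝ) - f i)|
      ≤ ∑ i, (|((c i : ℝ) - f i)| + ((c_p i : ℝ) - c i) * (1 - 2 * t)) :=
        Finset.sum_le_sum fun i _ => hterm i
    _ = ∑ i, |((c i : ℝ) - f i)| := by rw [Finset.sum_add_distrib, hzero, add_zero]
end

section
/- Maximality of the most deviant configuration (used in the proof of Theorem 2): for every admissible configuration c (i.e. c : Fin n → ℕ with c i ≤ 1 for all i and ∑ i, c i = β), the load-balancing cost satisfies S(c) ≤ S(c'), where c' is the most deviant configuration. -/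
/-!
For `x ∈ {0, 1}` and `0 ≤ y ≤ 1` one has `|x - y| = x * (1 - 2 * y) + y`, so the cost is affine in
the configuration. Pick a threshold `t` with `f i ≤ t` for `i < β` and `t ≤ f i` for `i ≥ β`. Since
`c'` is `1` exactly where `i < β`, `(c' i - c i) * (t - f i) ≥ 0` pointwise, so replacing `c` by `c'`
changes the `i`-th cost term by at least `(c' i - c i) * (1 - 2 * t)`. These lower bounds sum to `0`
because both configurations have total `β`.
-/

/-- Maximality of the most deviant configuration (used in the proof of Theorem 2):
for every admissible configuration `c` (i.e. `c i ≤ 1` for all `i` and `∑ i, c i = β`),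
its load-balancing cost is at most that of the most deviant configuration `c'`
(which is `1` on the first `β` indices and `0` on the rest). -/
theorem most_deviant_configuration_maximizes_cost
    (n : ℕ) (hn : 1 ≤ n) (f : Fin n → ℝ) (hmono : Monotone f)
    (hf0 : ∀ i, 0 ≤ f i) (hf1 : ∀ i, f i < 1)
    (β : ℕ) (hβ : β ≤ n) (hsum : ∑ i, f i = (β : ℝ))
    (c' : Fin n → ℕ) (hc' : ∀ i : Fin n, c' i = if (i : ℕ) < β then 1 else 0)
    (c : Fin n → ℕ) (hc1 : ∀ i, c i ≤ 1) (hcβ : ∑ i, c i = β) :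
    ∑ i, |((c i : ℝ) - f i)| ≤ ∑ i, |((c' i : ℝ) - f i)| := by
  obtain ⟨t, hlo, hhi⟩ : ∃ t : ℝ, (∀ i : Fin n, (i : ℕ) < β → f i ≤ t) ∧
      (∀ i : Fin n, ¬ (i : ℕ) < β → t ≤ f i) := by
    by_cases h : β < n
    · exact ⟨f ⟨β, h⟩, fun i hi => hmono (Fin.le_def.2 hi.le),
        fun i hi => hmono (Fin.le_def.2 (not_lt.1 hi))⟩
    · exact ⟨1, fun i _ => (hf1 i).le, fun i hi => absurd i.isLt (by omega)⟩
  have hc'β : ∑ i, c' i = β := by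
    simp only [hc']
    rw [Fin.sum_univ_eq_sum_range (fun i => if i < β then 1 else 0) n, Finset.sum_boole]
    have : (Finset.range n).filter (· < β) = Finset.range β := by
      ext i
      simp only [Finset.mem_filter, Finset.mem_range]
      omega
    simp [this]
  have hpt : ∀ i, |(c i : ℝ) - f i| ≤
      |(c' i : ℝ) - f i| + ((c i : ℝ) - (c' i : ℝ)) * (1 - 2 * t) := by
    intro i
    have h0 := hf0 i
    have h1 := hf1 i
    have e0 : |(0 : ℝ) - f i| = f i := by rw [zero_sub, abs_neg, abs_of_nonneg h0]
    have e1 : |(1 : ℝ) - f i| = 1 - f i := abs_of_nonneg (by linarith)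
    have hc : c i = 0 ∨ c i = 1 := by
      have := hc1 i
      omega
    rw [hc' i]
    by_cases hi : (i : ℕ) < β
    · have := hlo i hi
      rcases hc with h | h <;> simp only [h, hi, if_true, Nat.cast_zero, Nat.cast_one, e0, e1] <;>
        linarith
    · have := hhi i hi
      rcases hc with h | h <;> simp only [h, hi, if_false, Nat.cast_zero, Nat.cast_one, e0, e1] <;>
        linarith
  have hzero : ∑ i, ((c i : ℝ) - (c' i : ℝ)) * (1 - 2 * t) = 0 := by
    rw [← Finset.sum_mul, Finset.sum_sub_distrib, ← Nat.cast_sum, ← Nat.cast_sum, hcβ, hc'β,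
      sub_self, zero_mul]
  calc ∑ i, |(c i : ℝ) - f i|
      ≤ ∑ i, (|(c' i : ℝ) - f i| + ((c i : ℝ) - (c' i : ℝ)) * (1 - 2 * t)) :=
        Finset.sum_le_sum fun i _ => hpt i
    _ = ∑ i, |(c' i : ℝ) - f i| := by rw [Finset.sum_add_distrib, hzero, add_zero]
end

section
/- Exact deviation identity (computation in the proof of Theorem 2): the costs of the most deviant and the ideal configurations satisfy S(c') − S(c_p) = 2 · ( (∑ over i ∈ Fin n with α ≤ i of f i) − (∑ over i ∈ Fin n with i < β of f i) ); in particular this difference equals twice the difference between the sum of the S₂ largest values of f and the sum of the S₂ smallest values of f. -/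
/-!
For `c ∈ {0, 1}` and `0 ≤ x ≤ 1` one has `|c - x| = x + c - 2 c x`, so the cost of a 0/1
configuration supported on a set of `β` cells is `∑ f + β - 2 ∑_{support} f` (`cost_eq`). Both
configurations have a support of size `β`, so the first two terms cancel in the difference of
costs, which gives the first identity. The second is the first when `β ≤ α`; when `α ≤ β`, the
overlap of the two supports cancels, which amounts to passing to complements in both sums.
-/

open Finset in
/-- The cost of a 0/1 configuration depends only on the size of its support and on the sum of
`f` over it. -/
lemma cost_eq {n : ℕ} (f : Fin n → ℝ) (hf0 : ∀ i, 0 ≤ f i) (hf1 : ∀ i, f i < 1)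
    (p : Fin n → Prop) [DecidablePred p] (c : Fin n → ℕ) (hc : ∀ i, c i = if p i then 1 else 0) :
    ∑ i, |((c i : ℝ) - f i)| = ∑ i, f i + #(univ.filter p) - 2 * ∑ i ∈ univ.filter p, f i := by
  have hpt : ∀ i, |((c i : ℝ) - f i)|
      = f i + (if p i then 1 else 0) - 2 * (if p i then f i else 0) := by
    intro i
    rw [hc i]
    split_ifs
    · rw [abs_of_nonneg (by push_cast; linarith [hf1 i])]
      push_cast
      ring
    · rw [abs_of_nonpos (by push_cast; linarith [hf0 i])]
      push_cast
      ring
  rw [sum_congr rfl fun i _ => hpt i, sum_sub_distrib, sum_add_distrib, ← mul_sum, sum_boole,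
    sum_filter]

open Finset in
lemma sum_lt_add_sum_le {n : ℕ} (f : Fin n → ℝ) (k : ℕ) :
    ∑ i ∈ univ.filter (fun i : Fin n => (i : ℕ) < k), f i
      + ∑ i ∈ univ.filter (fun i : Fin n => k ≤ (i : ℕ)), f i = ∑ i, f i := by
  simpa only [not_lt] using sum_filter_add_sum_filter_not univ (fun i : Fin n => (i : ℕ) < k) f

open Finset in
/-- Exact deviation identity (computation in the proof of Theorem 2):
`S(c') − S(c_p) = 2 ((∑_{α ≤ i} f i) − (∑_{i < β} f i))`, and this difference also equals
twice the difference between the sum of the `S₂` largest values of `f` and the sum of its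
`S₂` smallest values, where `S₂ = min α β`. -/
theorem deviation_identity
    (n : ℕ) (hn : 1 ≤ n) (f : Fin n → ℝ) (hmono : Monotone f)
    (hf0 : ∀ i, 0 ≤ f i) (hf1 : ∀ i, f i < 1)
    (β : ℕ) (hβ : β ≤ n) (hsum : ∑ i, f i = (β : ℝ))
    (α : ℕ) (hα : α = n - β)
    (S₂ : ℕ) (hS₂ : S₂ = min α β)
    (c_p : Fin n → ℕ) (hcp : ∀ i : Fin n, c_p i = if (i : ℕ) < α then 0 else 1)
    (c' : Fin n → ℕ) (hc' : ∀ i : Fin n, c' i = if (i : ℕ) < β then 1 else 0) :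
    (∑ i, |((c' i : ℝ) - f i)|) - (∑ i, |((c_p i : ℝ) - f i)|)
      = 2 * ((∑ i ∈ univ.filter (fun i : Fin n => α ≤ (i : ℕ)), f i)
           - (∑ i ∈ univ.filter (fun i : Fin n => (i : ℕ) < β), f i)) ∧
    (∑ i, |((c' i : ℝ) - f i)|) - (∑ i, |((c_p i : ℝ) - f i)|)
      = 2 * ((∑ i ∈ univ.filter (fun i : Fin n => n - S₂ ≤ (i : ℕ)), f i)
           - (∑ i ∈ univ.filter (fun i : Fin n => (i : ℕ) < S₂), f i)) := by
  have cardlt : ∀ k ≤ n, #(univ.filter (fun i : Fin n => (i : ℕ) < k)) = k := by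
    intro k hk
    simp [Fin.card_filter_val_lt, hk]
  have cardle : #(univ.filter (fun i : Fin n => α ≤ (i : ℕ))) = β := by
    have h := card_filter_add_card_filter_not (s := univ) (fun i : Fin n => (i : ℕ) < α)
    simp only [not_lt, card_univ, Fintype.card_fin] at h
    rw [cardlt α (by omega)] at h
    omega
  have h1 := cost_eq f hf0 hf1 (fun i => (i : ℕ) < β) c' hc'
  have h2 := cost_eq f hf0 hf1 (fun i => α ≤ (i : ℕ)) c_p (fun i => by
    rw [hcp i]
    split_ifs <;> omega)
  rw [cardlt β hβ] at h1
  rw [cardle] at h2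
  refine ⟨by linarith, ?_⟩
  rcases le_total α β with h | h
  · have e1 : S₂ = α := by omega
    have e2 : n - S₂ = β := by omega
    rw [e2, e1]
    linarith [sum_lt_add_sum_le f α, sum_lt_add_sum_le f β]
  · have e1 : S₂ = β := by omega
    have e2 : n - S₂ = α := by omega
    rw [e2, e1]
    linarith
end

section
/- Upper bound on the cost of the final configuration (second half of Theorem 2, with the explicit constant): for every admissible configuration c, S(c) ≤ S(c_p) + 2 · S₂ · (f ⟨n−1⟩ − f ⟨0⟩), where f ⟨n−1⟩ and f ⟨0⟩ are the largest and smallest values of f; consequently, if S₂ ≥ 1 then S(c) < S(c_p) + 2 · S₂, since f ⟨n−1⟩ − f ⟨0⟩ < 1. -/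
/-!
For `c i ∈ {0, 1}` and `f i ∈ [0, 1]` the summand of the cost is affine in `c i`:
`|c i - f i| = f i + c i * (1 - 2 * f i)`. Two configurations with the same total therefore satisfy
`S(c) - S(c_p) = 2 * ∑ i, (c_p i - c i) * f i`. The positive and negative parts of `c_p - c` have
the same total mass `P`, the number of cells with `c_p i = 1` and `c i = 0`, so the sum is at most
`P * (max f - min f)`. Finally `P ≤ β` since `c_p` has `β` ones, and `P ≤ α` since `c` has `α` zeros.
-/

lemma abs_sub_eq_of_zero_or_one {a x : ℝ} (ha : a = 0 ∨ a = 1) (h0 : 0 ≤ x) (h1 : x ≤ 1) :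
    |a - x| = x + a * (1 - 2 * x) := by
  rcases ha with rfl | rfl
  · rw [zero_sub, abs_neg, abs_of_nonneg h0]; ring
  · rw [abs_of_nonneg (by linarith)]; ring

/-- Exchange bound: passing from a `0`-`1` configuration `a` to another one `b` of equal total raises
the cost by at most twice the mass of `a * (1 - b)` (the robots that move) times the spread of `f`. -/
lemma cost_le_of_exchange {ι : Type*} [Fintype ι] {f a b : ι → ℝ} {m M : ℝ}
    (h0 : ∀ i, 0 ≤ f i) (h1 : ∀ i, f i ≤ 1) (hm : ∀ i, m ≤ f i) (hM : ∀ i, f i ≤ M)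
    (ha : ∀ i, a i = 0 ∨ a i = 1) (hb : ∀ i, b i = 0 ∨ b i = 1)
    (hab : ∑ i, a i = ∑ i, b i) :
    ∑ i, |b i - f i| ≤ ∑ i, |a i - f i| + 2 * (∑ i, a i * (1 - b i)) * (M - m) := by
  have key : ∀ i, |b i - f i| ≤ |a i - f i| + 2 * (a i * (1 - b i)) * (M - m)
      + (b i - a i) * (1 - 2 * m) := by
    intro i
    rw [abs_sub_eq_of_zero_or_one (ha i) (h0 i) (h1 i),
      abs_sub_eq_of_zero_or_one (hb i) (h0 i) (h1 i)]
    have := hm i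
    have := hM i
    rcases ha i with h | h <;> rcases hb i with h' | h' <;> rw [h, h'] <;> linarith
  -- The correction term `(b i - a i) * (1 - 2 * m)` sums to zero because the totals agree.
  calc ∑ i, |b i - f i|
      ≤ ∑ i, (|a i - f i| + 2 * (a i * (1 - b i)) * (M - m) + (b i - a i) * (1 - 2 * m)) :=
        Finset.sum_le_sum fun i _ => key i
    _ = _ := by
        rw [Finset.sum_add_distrib, Finset.sum_add_distrib, ← Finset.sum_mul, ← Finset.sum_mul,
          ← Finset.mul_sum, Finset.sum_sub_distrib, hab]
        ring

lemma sum_step (n α : ℕ) :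
    ∑ i : Fin n, (if (i : ℕ) < α then 0 else 1) = n - α := by
  rw [Fin.sum_univ_eq_sum_range (fun i => if i < α then 0 else 1)]
  induction n with
  | zero => simp
  | succ k ih => rw [Finset.sum_range_succ, ih]; split_ifs <;> omega

/-- Upper bound on the cost of the final configuration (second half of Theorem 2, with the
explicit constant): every admissible configuration `c` satisfies
`S(c) ≤ S(c_p) + 2 S₂ (f_(n-1) − f_0)`, and consequently, if `S₂ ≥ 1`, then
`S(c) < S(c_p) + 2 S₂` since `f_(n-1) − f_0 < 1`. -/
theorem final_configuration_cost_upper_bound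
    (n : ℕ) (hn : 1 ≤ n) (f : Fin n → ℝ) (hmono : Monotone f)
    (hf0 : ∀ i, 0 ≤ f i) (hf1 : ∀ i, f i < 1)
    (β : ℕ) (hβ : β ≤ n) (hsum : ∑ i, f i = (β : ℝ))
    (α : ℕ) (hα : α = n - β)
    (S₂ : ℕ) (hS₂ : S₂ = min α β)
    (c_p : Fin n → ℕ) (hcp : ∀ i : Fin n, c_p i = if (i : ℕ) < α then 0 else 1)
    (c : Fin n → ℕ) (hc1 : ∀ i, c i ≤ 1) (hcβ : ∑ i, c i = β) :
    (∑ i, |((c i : ℝ) - f i)|)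
      ≤ (∑ i, |((c_p i : ℝ) - f i)|)
        + 2 * (S₂ : ℝ) * (f ⟨n - 1, by omega⟩ - f ⟨0, by omega⟩) ∧
    (1 ≤ S₂ →
      (∑ i, |((c i : ℝ) - f i)|) < (∑ i, |((c_p i : ℝ) - f i)|) + 2 * (S₂ : ℝ)) := by
  have hcp01 : ∀ i, (c_p i : ℝ) = 0 ∨ (c_p i : ℝ) = 1 := by
    intro i
    rw [hcp i]
    split_ifs <;> simp
  have hc01 : ∀ i, (c i : ℝ) = 0 ∨ (c i : ℝ) = 1 := by
    intro i
    have := hc1 i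
    have h : c i = 0 ∨ c i = 1 := by omega
    exact_mod_cast h
  have hcpβ : ∑ i, (c_p i : ℝ) = β := by
    have h : ∑ i, c_p i = β := by
      simp_rw [hcp]
      rw [sum_step]
      omega
    exact_mod_cast h
  have hcβ' : ∑ i, (c i : ℝ) = β := by exact_mod_cast hcβ
  have hPβ : ∑ i, (c_p i : ℝ) * (1 - c i) ≤ β := by
    rw [← hcpβ]
    refine Finset.sum_le_sum fun i _ => ?_
    rcases hcp01 i with h | h <;> rcases hc01 i with h' | h' <;> rw [h, h'] <;> norm_num
  have hPα : ∑ i, (c_p i : ℝ) * (1 - c i) ≤ α := by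
    have h : ∑ i, (1 - (c i : ℝ)) = α := by
      rw [Finset.sum_sub_distrib, hcβ', hα, Nat.cast_sub hβ]
      simp
    rw [← h]
    refine Finset.sum_le_sum fun i _ => ?_
    rcases hcp01 i with h | h <;> rcases hc01 i with h' | h' <;> rw [h, h'] <;> norm_num
  have hP : ∑ i, (c_p i : ℝ) * (1 - c i) ≤ S₂ := by
    rw [hS₂, Nat.cast_min]
    exact le_min hPα hPβ
  have hm : ∀ i, f ⟨0, by omega⟩ ≤ f i := fun i => hmono (Fin.mk_le_of_le_val (Nat.zero_le _))
  have hM : ∀ i, f i ≤ f ⟨n - 1, by omega⟩ := by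
    intro i
    apply hmono
    rw [Fin.le_def]
    have := i.isLt
    simp only
    omega
  have main := cost_le_of_exchange hf0 (fun i => (hf1 i).le) hm hM hcp01 hc01
    (hcpβ.trans hcβ'.symm)
  have hspread := hm ⟨n - 1, by omega⟩
  have bound : (∑ i, |((c i : ℝ) - f i)|)
      ≤ (∑ i, |((c_p i : ℝ) - f i)|)
        + 2 * (S₂ : ℝ) * (f ⟨n - 1, by omega⟩ - f ⟨0, by omega⟩) := by
    have := mul_le_mul_of_nonneg_right hP (sub_nonneg.2 hspread)
    linarith
  refine ⟨bound, fun h => ?_⟩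
  have hS : (0 : ℝ) < S₂ := by exact_mod_cast h
  have hlt : f ⟨n - 1, by omega⟩ - f ⟨0, by omega⟩ < 1 := by
    linarith [hf1 ⟨n - 1, by omega⟩, hf0 ⟨0, by omega⟩]
  have := mul_lt_mul_of_pos_left hlt hS
  linarith
end

section
/- Change of variables to Frenet coordinates (equation (6) of the paper): let A ⊆ ℝ² be a measurable set on which F is injective and on which 1 − r·κ(s) > 0 for every (s, r) ∈ A. Then for every integrable function g : ℝ × ℝ → ℝ, the integral of g over the image F(A) (with respect to 2-dimensional Lebesgue measure) equals ∫_{A} g(F(s, r)) · (1 − r·κ(s)) d(s, r). -/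
/-!
The theorem is the general change of variables formula for an injective differentiable map,
applied to `F`. The only geometric input is the Jacobian: with `T = γ'` and `v = rot T`, the columns
of `DF (s, r)` are `T + r • rot γ''` and `rot T`, so the determinant is
`‖T‖² - r ⟪γ'', rot T⟫ = 1 - r κ`, which is positive on `A` and thus equals its absolute value.
-/

open scoped RealInnerProductSpace
open MeasureTheory

/-- The linear map of the plane whose columns in the standard basis are `a` and `b`. -/
noncomputable def planeMap (a b : EuclideanSpace ℝ (Fin 2)) :
    EuclideanSpace ℝ (Fin 2) →L[ℝ] EuclideanSpace ℝ (Fin 2) :=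
  (EuclideanSpace.proj (0 : Fin 2) : EuclideanSpace ℝ (Fin 2) →L[ℝ] ℝ).smulRight a +
    (EuclideanSpace.proj (1 : Fin 2) : EuclideanSpace ℝ (Fin 2) →L[ℝ] ℝ).smulRight b

lemma planeMap_det (a b : EuclideanSpace ℝ (Fin 2)) :
    (planeMap a b).det = a 0 * b 1 - b 0 * a 1 := by
  rw [ContinuousLinearMap.det,
    ← LinearMap.det_toMatrix (EuclideanSpace.basisFun (Fin 2) ℝ).toBasis, Matrix.det_fin_two]
  simp [LinearMap.toMatrix_apply, planeMap]

/-- The Frenet map `x ↦ γ (x 0) + x 1 • v (x 0)` is differentiable as soon as `γ` and `v` are. -/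
lemma hasFDerivAt_frenet {γ v : ℝ → EuclideanSpace ℝ (Fin 2)} {a w : EuclideanSpace ℝ (Fin 2)}
    (x : EuclideanSpace ℝ (Fin 2)) (hγ : HasDerivAt γ a (x 0)) (hv : HasDerivAt v w (x 0)) :
    HasFDerivAt (fun y : EuclideanSpace ℝ (Fin 2) => γ (y 0) + y 1 • v (y 0))
      (planeMap (a + x 1 • w) (v (x 0))) x := by
  have h0 : HasFDerivAt (fun y : EuclideanSpace ℝ (Fin 2) => y 0)
      (EuclideanSpace.proj (0 : Fin 2) : EuclideanSpace ℝ (Fin 2) →L[ℝ] ℝ) x :=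
    (EuclideanSpace.proj (0 : Fin 2) : EuclideanSpace ℝ (Fin 2) →L[ℝ] ℝ).hasFDerivAt
  have h1 : HasFDerivAt (fun y : EuclideanSpace ℝ (Fin 2) => y 1)
      (EuclideanSpace.proj (1 : Fin 2) : EuclideanSpace ℝ (Fin 2) →L[ℝ] ℝ) x :=
    (EuclideanSpace.proj (1 : Fin 2) : EuclideanSpace ℝ (Fin 2) →L[ℝ] ℝ).hasFDerivAt
  have hγ0 := hγ.hasFDerivAt.comp x h0
  have hv0 := hv.hasFDerivAt.comp x h0
  refine (hγ0.add (h1.smul hv0)).congr_fderiv ?_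
  ext y i
  simp [planeMap]
  ring

/-- The normal `v = rot γ'` is differentiable with derivative `rot γ''`. -/
lemma hasDerivAt_normal {T v : ℝ → EuclideanSpace ℝ (Fin 2)} {a : EuclideanSpace ℝ (Fin 2)}
    {s : ℝ} (hT : HasDerivAt T a s) (hv : ∀ s, v s = ![-(T s 1), T s 0]) :
    HasDerivAt v !₂[-(a 1), a 0] s := by
  have hc (i : Fin 2) : HasDerivAt (fun t => T t i) (a i) s :=
    (EuclideanSpace.proj i : EuclideanSpace ℝ (Fin 2) →L[ℝ] ℝ).hasFDerivAt.comp_hasDerivAt s hT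
  have hvLp : v = fun t => WithLp.toLp 2 ![-(T t 1), T t 0] :=
    funext fun t => congrArg (WithLp.toLp 2) (hv t)
  rw [hvLp]
  have hpi : HasDerivAt (fun t => ![-(T t 1), T t 0]) ![-(a 1), a 0] s := by
    refine hasDerivAt_pi.2 fun i => ?_
    fin_cases i
    · simpa using (hc 1).fun_neg
    · simpa using hc 0
  exact (PiLp.hasFDerivAt_toLp (𝕜 := ℝ) 2 _).comp_hasDerivAt s hpi

/-- Change of variables to Frenet coordinates (equation (6) of the paper): if `A` is a
measurable set on which `F (s, r) = γ s + r • v s` is injective and on which the Jacobian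
`1 − r κ s` is positive, then for every integrable `g`,
`∫_{F(A)} g = ∫_A g (F (s,r)) (1 − r κ s) d(s,r)`. -/
theorem frenet_change_of_variables
    (γ γ' γ'' : ℝ → EuclideanSpace ℝ (Fin 2))
    (hγ : ∀ s, HasDerivAt γ (γ' s) s)
    (hγ' : ∀ s, HasDerivAt γ' (γ'' s) s)
    (hunit : ∀ s, ‖γ' s‖ = 1)
    (v : ℝ → EuclideanSpace ℝ (Fin 2))
    (hv : ∀ s, v s = ![-(γ' s 1), γ' s 0])
    (κ : ℝ → ℝ)
    (hκ : ∀ s, κ s = ⟪γ'' s, v s⟫)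
    (F : EuclideanSpace ℝ (Fin 2) → EuclideanSpace ℝ (Fin 2))
    (hF : ∀ x, F x = γ (x 0) + x 1 • v (x 0))
    (A : Set (EuclideanSpace ℝ (Fin 2))) (hA : MeasurableSet A)
    (hinj : Set.InjOn F A)
    (hjac : ∀ x ∈ A, 0 < 1 - x 1 * κ (x 0))
    (g : EuclideanSpace ℝ (Fin 2) → ℝ)
    (hg : IntegrableOn g (F '' A) volume) :
    ∫ y in F '' A, g y = ∫ x in A, g (F x) * (1 - x 1 * κ (x 0)) := by
  have hdet (x : EuclideanSpace ℝ (Fin 2)) :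
      (planeMap (γ' (x 0) + x 1 • !₂[-(γ'' (x 0) 1), γ'' (x 0) 0]) (v (x 0))).det
        = 1 - x 1 * κ (x 0) := by
    have hn : γ' (x 0) 0 ^ 2 + γ' (x 0) 1 ^ 2 = 1 := by
      have h := EuclideanSpace.real_norm_sq_eq (γ' (x 0))
      rw [hunit, Fin.sum_univ_two] at h
      linarith
    rw [planeMap_det, hκ]
    simp [hv, PiLp.inner_apply, Fin.sum_univ_two]
    linear_combination hn
  have hder (x : EuclideanSpace ℝ (Fin 2)) (_ : x ∈ A) : HasFDerivWithinAt F
      (planeMap (γ' (x 0) + x 1 • !₂[-(γ'' (x 0) 1), γ'' (x 0) 0]) (v (x 0))) A x := by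
    rw [funext hF]
    exact (hasFDerivAt_frenet x (hγ _) (hasDerivAt_normal (hγ' _) hv)).hasFDerivWithinAt
  rw [integral_image_eq_integral_abs_det_fderiv_smul volume hA hder hinj g]
  refine setIntegral_congr_fun hA fun x hx => ?_
  simp only [hdet, abs_of_pos (hjac x hx), smul_eq_mul]
  exact mul_comm _ _
end
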